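/- Let m ≥ 1, ε ∈ (0, 1], δ ∈ (0, 1), Δ > 0, and let t, t' ∈ ℝ^m satisfy ‖t − t'‖₂ ≤ Δ. Set σ = √(2 ln(1.25/δ)) · Δ/ε, and let μ_t denote the product measure on ℝ^m whose i-th factor is the Gaussian distribution N(t_i, σ²), and similarly μ_{t'}. Then μ_t is (ε, δ)-close to μ_{t'}: for every measurable set A ⊆ ℝ^m, μ_t(A) ≤ e^ε · μ_{t'}(A) + δ. -/

import Mathlib

open MeasureTheory ProbabilityTheory

/-!
The density of `μ_t` with respect to `μ_{t'}` is `exp L`, where the privacy loss `L` is an affine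
function of the sample. Hence `μ_t A ≤ e^ε μ_{t'} A + μ_t {L > ε}`, and it remains to bound the last
term by `δ`. Under `μ_t` the loss `L` has law `N(s/2, s)` with `s = ∑ (tᵢ - t'ᵢ)² / σ²`, and the
calibration of `σ` gives `2 ln(1.25/δ) s ≤ ε²`. When `s/2 ≤ ε`, the sharp sub-Gaussian
tail gives `½ exp(-(ε - s/2)² / (2s)) ≤ ½ √e (δ/1.25) ≤ δ`. When `ε < s/2`, the calibration forces
`δ ≥ 15/16`, and bounding the Gaussian density by its maximum suffices.
-/

open scoped ENNReal NNReal

section Density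

theorem withDensity_apply_le_mul_add {α : Type*} [MeasurableSpace α] (μ : Measure α)
    {f : α → ℝ≥0∞} (hf : Measurable f) (c : ℝ≥0∞) {A : Set α} (hA : MeasurableSet A) :
    μ.withDensity f A ≤ c * μ A + μ.withDensity f {x | c < f x} := by
  have hlarge : MeasurableSet {x | c < f x} := measurableSet_lt measurable_const hf
  have hsmall : μ.withDensity f (A \ {x | c < f x}) ≤ c * μ A := by
    rw [withDensity_apply _ (hA.diff hlarge)]
    calc ∫⁻ x in A \ {x | c < f x}, f x ∂μ
        ≤ ∫⁻ _ in A \ {x | c < f x}, c ∂μ :=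
          setLIntegral_mono measurable_const fun x hx => not_lt.1 hx.2
      _ = c * μ (A \ {x | c < f x}) := setLIntegral_const _ _
      _ ≤ c * μ A := by gcongr; exact Set.sdiff_subset
  calc μ.withDensity f A
      ≤ μ.withDensity f (A \ {x | c < f x} ∪ {x | c < f x}) :=
        measure_mono (by rw [Set.sdiff_union_self]; exact Set.subset_union_left)
    _ ≤ μ.withDensity f (A \ {x | c < f x}) + μ.withDensity f {x | c < f x} :=
        measure_union_le _ _
    _ ≤ c * μ A + μ.withDensity f {x | c < f x} := by gcongr

variable {ι : Type*} [Fintype ι] {α : ι → Type*}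

theorem indicator_univ_pi_prod {M : Type*} [CommMonoidWithZero M] (s : ∀ i, Set (α i))
    (f : ∀ i, α i → M) (x : ∀ i, α i) :
    (Set.univ.pi s).indicator (fun x => ∏ i, f i (x i)) x = ∏ i, (s i).indicator (f i) (x i) := by
  by_cases hx : x ∈ Set.univ.pi s
  · rw [Set.indicator_of_mem hx]
    exact Finset.prod_congr rfl fun i _ => (Set.indicator_of_mem (hx i trivial) _).symm
  · rw [Set.indicator_of_notMem hx]
    obtain ⟨i, hi⟩ : ∃ i, x i ∉ s i := by simpa using hx
    exact (Finset.prod_eq_zero (Finset.mem_univ i) (Set.indicator_of_notMem hi _)).symm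

variable [∀ i, MeasurableSpace (α i)] (μ : ∀ i, Measure (α i)) [∀ i, IsProbabilityMeasure (μ i)]
  {f : ∀ i, α i → ℝ≥0∞}

theorem lintegral_pi_prod_eq_prod_lintegral (hf : ∀ i, Measurable (f i)) :
    ∫⁻ x, ∏ i, f i (x i) ∂Measure.pi μ = ∏ i, ∫⁻ y, f i y ∂μ i := by
  rw [lintegral_prod_eq_prod_lintegral_of_indepFun Finset.univ (fun i (x : ∀ i, α i) => f i (x i))
    (iIndepFun_pi fun i => (hf i).aemeasurable) fun i => (hf i).comp (measurable_pi_apply i)]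
  exact Finset.prod_congr rfl fun i _ => (measurePreserving_eval μ i).lintegral_comp (hf i)

theorem pi_withDensity (hf : ∀ i, Measurable (f i))
    [∀ i, SigmaFinite ((μ i).withDensity (f i))] :
    Measure.pi (fun i => (μ i).withDensity (f i)) =
      (Measure.pi μ).withDensity fun x => ∏ i, f i (x i) := by
  refine Measure.pi_eq fun s hs => ?_
  have hs_pi : MeasurableSet (Set.univ.pi s) := MeasurableSet.univ_pi hs
  rw [withDensity_apply _ hs_pi, ← lintegral_indicator hs_pi]
  simp only [indicator_univ_pi_prod]
  rw [lintegral_pi_prod_eq_prod_lintegral μ fun i => (hf i).indicator (hs i)]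
  refine Finset.prod_congr rfl fun i _ => ?_
  rw [withDensity_apply _ (hs i), lintegral_indicator (hs i)]

end Density

section GaussianTail

theorem gaussianReal_Ioi_mean_le (μ : ℝ) (v : ℝ≥0) :
    gaussianReal μ v (Set.Ioi μ) ≤ ENNReal.ofReal (1 / 2) := by
  have hreflect : gaussianReal μ v (Set.Iio μ) = gaussianReal μ v (Set.Ioi μ) := by
    have hmap := gaussianReal_map_const_sub (μ := μ) (v := v) (2 * μ)
    rw [show 2 * μ - μ = μ by ring] at hmap
    conv_lhs => rw [← hmap, Measure.map_apply (by fun_prop) measurableSet_Iio]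
    congr 1
    ext x
    simp only [Set.mem_preimage, Set.mem_Iio, Set.mem_Ioi]
    constructor <;> intro h <;> linarith
  rw [one_div, ENNReal.ofReal_inv_of_pos two_pos, ENNReal.ofReal_ofNat,
    ENNReal.le_inv_iff_mul_le, mul_two]
  nth_rewrite 1 [← hreflect]
  rw [← measure_union Set.Iio_disjoint_Ioi_same measurableSet_Ioi]
  exact prob_le_one

theorem gaussianReal_eq_withDensity_gaussianReal (a b : ℝ) {v : ℝ≥0} (hv : v ≠ 0) :
    gaussianReal a v = (gaussianReal b v).withDensity
      fun x => ENNReal.ofReal (Real.exp (((x - b) ^ 2 - (x - a) ^ 2) / (2 * v))) := by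
  rw [gaussianReal_of_var_ne_zero _ hv, gaussianReal_of_var_ne_zero _ hv,
    ← withDensity_mul _ (measurable_gaussianPDF b v) (by fun_prop)]
  congr 1
  ext x
  rw [Pi.mul_apply, gaussianPDF, gaussianPDF, ← ENNReal.ofReal_mul (gaussianPDFReal_nonneg _ _ _),
    gaussianPDFReal, gaussianPDFReal, mul_assoc (√_)⁻¹, ← Real.exp_add]
  congr 3
  ring

variable {μ x : ℝ} {v : ℝ≥0}

/- Translating by `μ - x` turns the event into `Ioi μ`, of mass at most `1/2`, on which the density
of the translated Gaussian relative to the original one is at most the exponential factor. The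
resulting constant `1/2`, absent from the Chernoff bound, is essential for the noise scale
`√(2 ln(1.25/δ))`. -/
theorem gaussianReal_Ioi_le_of_mean_le (hv : v ≠ 0) (hx : μ ≤ x) :
    gaussianReal μ v (Set.Ioi x) ≤
      ENNReal.ofReal (Real.exp (-(x - μ) ^ 2 / (2 * v)) * (1 / 2)) := by
  have htranslate : gaussianReal μ v (Set.Ioi x) =
      gaussianReal (μ - (x - μ)) v (Set.Ioi μ) := by
    rw [← gaussianReal_map_sub_const, Measure.map_apply (by fun_prop) measurableSet_Ioi]
    congr 1
    ext y
    simp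
  rw [htranslate, gaussianReal_eq_withDensity_gaussianReal _ μ hv,
    withDensity_apply _ measurableSet_Ioi, ENNReal.ofReal_mul (Real.exp_nonneg _)]
  calc _ ≤ ∫⁻ _ in Set.Ioi μ, ENNReal.ofReal (Real.exp (-(x - μ) ^ 2 / (2 * v)))
          ∂gaussianReal μ v := by
        refine setLIntegral_mono measurable_const fun y hy => ?_
        have hcross : 0 ≤ (y - μ) * (x - μ) :=
          mul_nonneg (sub_nonneg.2 (le_of_lt hy)) (sub_nonneg.2 hx)
        gcongr
        linarith
    _ = ENNReal.ofReal (Real.exp (-(x - μ) ^ 2 / (2 * v))) * gaussianReal μ v (Set.Ioi μ) :=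
        setLIntegral_const _ _
    _ ≤ _ := by gcongr; exact gaussianReal_Ioi_mean_le μ v

theorem gaussianPDFReal_le (μ : ℝ) (v : ℝ≥0) (x : ℝ) :
    gaussianPDFReal μ v x ≤ (√(2 * Real.pi * v))⁻¹ := by
  refine mul_le_of_le_one_right (by positivity) (Real.exp_le_one_iff.2 ?_)
  exact div_nonpos_of_nonpos_of_nonneg (neg_nonpos.2 (sq_nonneg _)) (by positivity)

theorem gaussianReal_apply_le_mul_volume (μ : ℝ) (hv : v ≠ 0) (s : Set ℝ) :
    gaussianReal μ v s ≤ ENNReal.ofReal (√(2 * Real.pi * v))⁻¹ * volume s := by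
  rw [gaussianReal_apply μ hv, ← setLIntegral_const]
  exact lintegral_mono fun x => ENNReal.ofReal_le_ofReal (gaussianPDFReal_le μ v x)

theorem gaussianReal_Ioi_le_of_le_mean (hv : v ≠ 0) (hx : x ≤ μ) :
    gaussianReal μ v (Set.Ioi x) ≤
      ENNReal.ofReal ((√(2 * Real.pi * v))⁻¹ * (μ - x) + 1 / 2) := by
  rw [← Set.Ioc_union_Ioi_eq_Ioi hx,
    ENNReal.ofReal_add (mul_nonneg (by positivity) (sub_nonneg.2 hx)) (by norm_num),
    ENNReal.ofReal_mul (by positivity), ← Real.volume_Ioc]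
  exact (measure_union_le _ _).trans
    (add_le_add (gaussianReal_apply_le_mul_volume μ hv _) (gaussianReal_Ioi_mean_le μ v))

end GaussianTail

section Calibration

variable {ε δ Δ : ℝ}

theorem one_fifth_le_log_div (hδ : δ ∈ Set.Ioc (0 : ℝ) 1) : 1 / 5 ≤ Real.log (1.25 / δ) := by
  have h := Real.one_sub_inv_le_log_of_pos (div_pos (by norm_num : (0 : ℝ) < 1.25) hδ.1)
  rw [inv_div] at h
  norm_num at h ⊢
  linarith [hδ.2]

theorem exp_neg_log_div (hδ : 0 < δ) : Real.exp (-Real.log (1.25 / δ)) = δ / 1.25 := by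
  rw [Real.exp_neg, Real.exp_log (by positivity), inv_div]

theorem gaussian_noise_scale_pos (hε : 0 < ε) (hδ : δ ∈ Set.Ioc (0 : ℝ) 1) (hΔ : 0 < Δ) :
    0 < √(2 * Real.log (1.25 / δ)) * Δ / ε := by
  have hlog := one_fifth_le_log_div hδ
  have hsqrt : 0 < √(2 * Real.log (1.25 / δ)) := Real.sqrt_pos.2 (by linarith)
  exact div_pos (mul_pos hsqrt hΔ) hε

theorem two_mul_log_mul_sum_div_le {ι : Type*} [Fintype ι] (hε : 0 < ε)
    (hδ : δ ∈ Set.Ioc (0 : ℝ) 1) (hΔ : 0 < Δ) {u : ι → ℝ} (hu : √(∑ i, u i ^ 2) ≤ Δ) :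
    2 * Real.log (1.25 / δ) *
      ∑ i, u i ^ 2 / Real.toNNReal ((√(2 * Real.log (1.25 / δ)) * Δ / ε) ^ 2) ≤ ε ^ 2 := by
  have hlog : 0 < 2 * Real.log (1.25 / δ) := by linarith [one_fifth_le_log_div hδ]
  rw [← Finset.sum_div, Real.coe_toNNReal _ (sq_nonneg _), div_pow, mul_pow, Real.sq_sqrt hlog.le,
    ← mul_div_assoc, div_le_iff₀ (by positivity), mul_div_cancel₀ _ (by positivity)]
  exact mul_le_mul_of_nonneg_left ((Real.sqrt_le_left hΔ.le).1 hu) hlog.le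

end Calibration

section PrivacyLossTail

variable {ε δ : ℝ} {s : ℝ≥0}

theorem gaussianReal_Ioi_le_of_half_le (hε : ε ≤ 1) (hδ : 0 < δ) (hs : s ≠ 0)
    (hcal : 2 * Real.log (1.25 / δ) * s ≤ ε ^ 2) (hsε : s / 2 ≤ ε) :
    gaussianReal (s / 2) s (Set.Ioi ε) ≤ ENNReal.ofReal δ := by
  refine (gaussianReal_Ioi_le_of_mean_le hs hsε).trans (ENNReal.ofReal_le_ofReal ?_)
  have hs_pos : (0 : ℝ) < s := NNReal.coe_pos.2 (pos_iff_ne_zero.2 hs)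
  have hexponent : -(ε - s / 2) ^ 2 / (2 * s) ≤ 1 / 2 + -Real.log (1.25 / δ) := by
    rw [div_le_iff₀ (mul_pos two_pos hs_pos)]
    nlinarith [sq_nonneg (s : ℝ)]
  have hsqrt_e : Real.exp (1 / 2) ≤ 2.5 := by
    have hle_e : Real.exp (1 / 2) ≤ Real.exp 1 := Real.exp_le_exp.2 (by norm_num)
    have hsq : Real.exp (1 / 2) ^ 2 = Real.exp 1 := by
      rw [← Real.exp_nat_mul]
      norm_num
    nlinarith [Real.exp_one_lt_three]
  calc Real.exp (-(ε - s / 2) ^ 2 / (2 * s)) * (1 / 2)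
      ≤ Real.exp (1 / 2 + -Real.log (1.25 / δ)) * (1 / 2) := by gcongr
    _ = Real.exp (1 / 2) * (δ / 1.25) * (1 / 2) := by rw [Real.exp_add, exp_neg_log_div hδ]
    _ ≤ 2.5 * (δ / 1.25) * (1 / 2) := by gcongr
    _ = δ := by ring

theorem gaussianReal_Ioi_le_of_lt_half (hε : ε ∈ Set.Icc (0 : ℝ) 1) (hδ : δ ∈ Set.Ioc (0 : ℝ) 1)
    (hcal : 2 * Real.log (1.25 / δ) * s ≤ ε ^ 2) (hsε : ε < s / 2) :
    gaussianReal (s / 2) s (Set.Ioi ε) ≤ ENNReal.ofReal δ := by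
  obtain ⟨hε0, hε1⟩ := hε
  have hs_pos : (0 : ℝ) < s := by linarith
  have hs_le : (s : ℝ) ≤ 5 / 2 := by nlinarith [one_fifth_le_log_div hδ]
  have hlog_le : Real.log (1.25 / δ) ≤ 1 / 4 := by
    refine le_of_mul_le_mul_right ?_ hs_pos
    nlinarith
  have hδ_ge : 15 / 16 ≤ δ := by
    have h := Real.add_one_le_exp (-Real.log (1.25 / δ))
    rw [exp_neg_log_div hδ.1, le_div_iff₀ (by norm_num)] at h
    linarith
  have hsqrt_ge : 3 / 2 * s ≤ √(2 * Real.pi * s) := by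
    refine Real.le_sqrt_of_sq_le ?_
    nlinarith [Real.pi_gt_three]
  have hinterval : (√(2 * Real.pi * s))⁻¹ * (s / 2 - ε) ≤ 1 / 3 := by
    rw [inv_mul_le_iff₀ (by positivity)]
    linarith
  have hs : s ≠ 0 := (NNReal.coe_pos.1 hs_pos).ne'
  exact (gaussianReal_Ioi_le_of_le_mean hs hsε.le).trans
    (ENNReal.ofReal_le_ofReal (by linarith))

theorem gaussianReal_half_Ioi_le (hε : ε ∈ Set.Icc (0 : ℝ) 1) (hδ : δ ∈ Set.Ioc (0 : ℝ) 1)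
    (hcal : 2 * Real.log (1.25 / δ) * s ≤ ε ^ 2) :
    gaussianReal (s / 2) s (Set.Ioi ε) ≤ ENNReal.ofReal δ := by
  rcases eq_or_ne s 0 with rfl | hs
  · simp [gaussianReal_zero_var, hε.1]
  rcases le_or_gt (s / 2 : ℝ) ε with hsε | hsε
  · exact gaussianReal_Ioi_le_of_half_le hε.2 hδ.1 hs hcal hsε
  · exact gaussianReal_Ioi_le_of_lt_half hε hδ hcal hsε

end PrivacyLossTail

section PrivacyLoss

/-- The logarithm of the density of `N(a, v)` with respect to `N(b, v)`, called the privacy loss of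
the pair; composed with a sample from `N(a, v)` it is the privacy loss random variable. -/
noncomputable def gaussianPrivacyLoss (a b : ℝ) (v : ℝ≥0) (x : ℝ) : ℝ :=
  ((x - b) ^ 2 - (x - a) ^ 2) / (2 * v)

@[fun_prop]
theorem measurable_gaussianPrivacyLoss (a b : ℝ) (v : ℝ≥0) :
    Measurable (gaussianPrivacyLoss a b v) := by
  unfold gaussianPrivacyLoss
  fun_prop

theorem gaussianReal_map_gaussianPrivacyLoss (a b : ℝ) {v : ℝ≥0} (hv : v ≠ 0) :
    (gaussianReal a v).map (gaussianPrivacyLoss a b v) =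
      gaussianReal ((‖a - b‖₊ ^ 2 / v : ℝ≥0) / 2) (‖a - b‖₊ ^ 2 / v) := by
  have hv' : (v : ℝ) ≠ 0 := NNReal.coe_ne_zero.2 hv
  have haffine : gaussianPrivacyLoss a b v =
      (fun y => y + (b ^ 2 - a ^ 2) / (2 * v)) ∘ fun x => (a - b) / v * x := by
    ext x
    simp only [gaussianPrivacyLoss, Function.comp_apply]
    field_simp
    ring
  rw [haffine, ← Measure.map_map (by fun_prop) (by fun_prop), gaussianReal_map_const_mul,
    gaussianReal_map_add_const, gaussianReal_ext_iff]
  constructor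
  · simp only [NNReal.coe_div, NNReal.coe_pow, coe_nnnorm, Real.norm_eq_abs, sq_abs]
    field_simp
    ring
  · ext
    simp only [NNReal.coe_div, NNReal.coe_pow, NNReal.coe_mul, NNReal.coe_mk, coe_nnnorm,
      Real.norm_eq_abs, sq_abs]
    field_simp

variable {ι : Type*} [Fintype ι]

theorem pi_gaussianReal_map_sum (μ : ι → ℝ) (v : ι → ℝ≥0) :
    (Measure.pi fun i => gaussianReal (μ i) (v i)).map (fun x => ∑ i, x i) =
      gaussianReal (∑ i, μ i) (∑ i, v i) := by
  apply Measure.ext_of_charFun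
  ext r
  rw [charFun_map_sum_pi_eq_prod, Finset.prod_apply]
  simp only [charFun_gaussianReal, ← Complex.exp_sum, Finset.sum_sub_distrib, Complex.ofReal_sum,
    NNReal.coe_sum, Finset.mul_sum, Finset.sum_mul, Finset.sum_div]

variable (t t' : ι → ℝ) {v : ι → ℝ≥0}

theorem pi_gaussianReal_map_sum_gaussianPrivacyLoss (hv : ∀ i, v i ≠ 0) :
    (Measure.pi fun i => gaussianReal (t i) (v i)).map
        (fun x => ∑ i, gaussianPrivacyLoss (t i) (t' i) (v i) (x i)) =
      gaussianReal ((∑ i, ‖t i - t' i‖₊ ^ 2 / v i : ℝ≥0) / 2) (∑ i, ‖t i - t' i‖₊ ^ 2 / v i) := by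
  have hcoord : (Measure.pi fun i => gaussianReal (t i) (v i)).map
        (fun x i => gaussianPrivacyLoss (t i) (t' i) (v i) (x i)) =
      Measure.pi fun i => gaussianReal ((‖t i - t' i‖₊ ^ 2 / v i : ℝ≥0) / 2)
        (‖t i - t' i‖₊ ^ 2 / v i) := by
    rw [Measure.pi_map_pi fun i => by fun_prop]
    simp only [gaussianReal_map_gaussianPrivacyLoss _ _ (hv _)]
  rw [NNReal.coe_sum, Finset.sum_div, ← pi_gaussianReal_map_sum, ← hcoord,
    Measure.map_map (by fun_prop) (by fun_prop)]
  rfl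

theorem pi_gaussianReal_eq_withDensity (hv : ∀ i, v i ≠ 0) :
    Measure.pi (fun i => gaussianReal (t i) (v i)) =
      (Measure.pi fun i => gaussianReal (t' i) (v i)).withDensity fun x =>
        ENNReal.ofReal (Real.exp (∑ i, gaussianPrivacyLoss (t i) (t' i) (v i) (x i))) := by
  have hdensity (i : ι) : gaussianReal (t i) (v i) = (gaussianReal (t' i) (v i)).withDensity
      fun x => ENNReal.ofReal (Real.exp (gaussianPrivacyLoss (t i) (t' i) (v i) x)) :=
    gaussianReal_eq_withDensity_gaussianReal _ _ (hv i)
  have (i : ι) : SigmaFinite ((gaussianReal (t' i) (v i)).withDensity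
      fun x => ENNReal.ofReal (Real.exp (gaussianPrivacyLoss (t i) (t' i) (v i) x))) :=
    hdensity i ▸ inferInstance
  simp only [Real.exp_sum, ENNReal.ofReal_prod_of_nonneg fun _ _ => Real.exp_nonneg _]
  calc _ = Measure.pi fun i => (gaussianReal (t' i) (v i)).withDensity
          fun x => ENNReal.ofReal (Real.exp (gaussianPrivacyLoss (t i) (t' i) (v i) x)) := by
        simp only [← hdensity]
    _ = _ := pi_withDensity _ fun i => by fun_prop

end PrivacyLoss

section Closeness

/-- `(ε, δ)`-closeness of `μ` to `ν`, the one-sided relation that differential privacy requires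
between the output laws on neighboring datasets. -/
def IsEpsDeltaClose {α : Type*} [MeasurableSpace α] (ε δ : ℝ) (μ ν : Measure α) : Prop :=
  ∀ A : Set α, MeasurableSet A → μ A ≤ ENNReal.ofReal (Real.exp ε) * ν A + ENNReal.ofReal δ

theorem isEpsDeltaClose_withDensity_exp {α : Type*} [MeasurableSpace α] {ε δ : ℝ} {ν : Measure α}
    {L : α → ℝ} (hL : Measurable L)
    (htail : ν.withDensity (fun x => ENNReal.ofReal (Real.exp (L x))) {x | ε < L x} ≤
      ENNReal.ofReal δ) :
    IsEpsDeltaClose ε δ (ν.withDensity fun x => ENNReal.ofReal (Real.exp (L x))) ν := by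
  intro A hA
  refine (withDensity_apply_le_mul_add ν (by fun_prop) (ENNReal.ofReal (Real.exp ε)) hA).trans ?_
  simp only [ENNReal.ofReal_lt_ofReal_iff (Real.exp_pos _), Real.exp_lt_exp]
  gcongr

theorem gaussian_mechanism_dp_general {ι : Type*} [Fintype ι] {ε δ : ℝ}
    (hε : ε ∈ Set.Icc (0 : ℝ) 1) (hδ : δ ∈ Set.Ioc (0 : ℝ) 1) (t t' : ι → ℝ)
    {v : ι → ℝ≥0} (hv : ∀ i, v i ≠ 0)
    (hcal : 2 * Real.log (1.25 / δ) * ∑ i, (t i - t' i) ^ 2 / v i ≤ ε ^ 2) :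
    IsEpsDeltaClose ε δ (Measure.pi fun i => gaussianReal (t i) (v i))
      (Measure.pi fun i => gaussianReal (t' i) (v i)) := by
  have hdensity := pi_gaussianReal_eq_withDensity t t' hv
  rw [hdensity]
  refine isEpsDeltaClose_withDensity_exp (by fun_prop) ?_
  rw [← hdensity]
  change Measure.pi (fun i => gaussianReal (t i) (v i))
    ((fun x => ∑ i, gaussianPrivacyLoss (t i) (t' i) (v i) (x i)) ⁻¹' Set.Ioi ε) ≤ _
  rw [← Measure.map_apply (by fun_prop) measurableSet_Ioi,
    pi_gaussianReal_map_sum_gaussianPrivacyLoss t t' hv]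
  exact gaussianReal_half_Ioi_le hε hδ (by simpa using hcal)

end Closeness

/-- The Gaussian mechanism is `(ε, δ)`-differentially private: if `‖t - t'‖₂ ≤ Δ`
and `σ = √(2 ln(1.25/δ)) Δ/ε`, then the product of Gaussians `N(tᵢ, σ²)` is
`(ε, δ)`-close to the product of Gaussians `N(t'ᵢ, σ²)`. -/
theorem gaussian_mechanism_dp
    {m : ℕ} (hm : 1 ≤ m) (ε δ Δ : ℝ) (hε : ε ∈ Set.Ioc (0:ℝ) 1)
    (hδ : δ ∈ Set.Ioo (0:ℝ) 1) (hΔ : 0 < Δ)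
    (t t' : Fin m → ℝ) (hsens : Real.sqrt (∑ i, (t i - t' i) ^ 2) ≤ Δ)
    (σ : ℝ) (hσ : σ = Real.sqrt (2 * Real.log (1.25 / δ)) * Δ / ε) :
    ∀ A : Set (Fin m → ℝ), MeasurableSet A →
      Measure.pi (fun i => gaussianReal (t i) (Real.toNNReal (σ ^ 2))) A ≤
        ENNReal.ofReal (Real.exp ε) *
          Measure.pi (fun i => gaussianReal (t' i) (Real.toNNReal (σ ^ 2))) A
          + ENNReal.ofReal δ := by
  subst hσ
  have hδ' := Set.Ioo_subset_Ioc_self hδ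
  exact gaussian_mechanism_dp_general (Set.Ioc_subset_Icc_self hε) hδ' t t'
    (fun _ => (Real.toNNReal_pos.2 (sq_pos_of_pos (gaussian_noise_scale_pos hε.1 hδ' hΔ))).ne')
    (two_mul_log_mul_sum_div_le hε.1 hδ' hΔ hsens)
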